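/- (Main Theorem) The normalized Miller-Rabin witness sets W(n)/n ⊂ [0,1] become equidistributed as n → ∞ through odd composite integers: for every 0 ≤ a ≤ b ≤ 1, #{w ∈ W(n) : a ≤ w/n ≤ b} / #W(n) → b - a. -/

import Mathlib

open Finset Filter

/-- The 2-adic valuation of n - 1. -/
def s2 (n : ℕ) : ℕ := (n - 1).factorization 2

/-- The odd part of n - 1. -/
def oddPart (n : ℕ) : ℕ := (n - 1) / 2 ^ s2 n

/-- The Miller-Rabin witness set of n. -/
def witnessSet (n : ℕ) : Finset ℕ :=
  (Finset.range n).filter (fun a => 1 < a ∧ Nat.gcd a n = 1 ∧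
    (a : ZMod n) ^ oddPart n ≠ 1 ∧ ∀ j < s2 n, (a : ZMod n) ^ (2 ^ j * oddPart n) ≠ -1)

/-! By Weyl's criterion it is enough that, for every fixed `k ≠ 0`, the sum of `e(kw/n)` over the
witnesses is small compared with their number.

A unit `u` modulo `n` that is not a witness satisfies exactly one of `u ^ d = 1` and
`u ^ (2 ^ i * d) = -1` with `i < s`. Each of these conditions cuts out a fibre of a power map, hence
a set `A` stable under the kernel `H` of that map and with `#A ≤ #H`. The sum over `A` is therefore
the same at all the frequencies `k * h`, `h ∈ H`, so Parseval's identity bounds it by `√(|k| * n)`.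
As `s ≤ log₂ n`, the sum over the witnesses is `O(√n * log n)`.

All units that are not witnesses lie in one proper subgroup, so at least `φ(n) / 2` units are
witnesses. If `n` is not coprime to `φ(n)`, that subgroup is `u ^ (n - 1) = 1`, which is proper by
Cauchy's theorem. Otherwise `n` is a product of two coprime factors greater than `2`; the subgroup
is `u ^ (2 ^ j * d) = ±1`, where `j < s` is largest such that `-1` is a `2 ^ j * d`-th power, and
the Chinese remainder theorem makes it proper. Since the `i`-th prime factor of `n` is at least
`i + 1`, the product of the `1 - 1 / p` telescopes to `φ(n) ≥ n / (log₂ n + 1)`, so the number of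
witnesses outgrows `√n * log n`. -/

section CharacterSums

@[to_additive]
theorem card_fiber_le_card_fiber_one {G M : Type*} [Group G] [Fintype G] [Monoid M] [DecidableEq M]
    (f : G →* M) (x : M) : #{g | f g = x} ≤ #{g | f g = 1} := by
  by_cases hx : x ∈ Set.range f
  · exact (MonoidHom.card_fiber_eq_of_mem_range f hx ⟨1, map_one f⟩).le
  · have hempty : ({g | f g = x} : Finset G) = ∅ :=
      filter_eq_empty_iff.2 fun g _ hg => hx ⟨g, hg⟩
    simp [hempty]

theorem sum_units_mul_of_stable {R M : Type*} [Monoid R] [AddCommMonoid M] {A : Finset R} {h : Rˣ}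
    (hA : ∀ a ∈ A, ↑h * a ∈ A) (f : R → M) : ∑ a ∈ A, f (h * a) = ∑ a ∈ A, f a := by
  classical
  have himage : A.image (h.val * ·) = A :=
    eq_of_subset_of_card_le (image_subset_iff.2 hA)
      (card_image_of_injective _ h.isUnit.mul_right_injective).ge
  conv_rhs => rw [← himage, sum_image h.isUnit.mul_right_injective.injOn]

variable {R : Type*} [CommRing R] [Fintype R] {ψ : AddChar R ℂ}

theorem sum_comp_mul_left_le [DecidableEq R] (t : R) {F : R → ℝ} (hF : ∀ r, 0 ≤ F r) :
    ∑ x, F (t * x) ≤ #{x | t * x = 0} * ∑ r, F r :=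
  calc ∑ x, F (t * x) = ∑ r, (#{x | t * x = r} : ℝ) * F r := by
        rw [← sum_fiberwise univ (t * ·)]
        refine sum_congr rfl fun r _ => ?_
        rw [sum_congr rfl fun x hx => congrArg F (mem_filter.1 hx).2, sum_const, nsmul_eq_mul]
    _ ≤ ∑ r, (#{x | t * x = 0} : ℝ) * F r := by
        refine sum_le_sum fun r _ => mul_le_mul_of_nonneg_right ?_ (hF r)
        exact_mod_cast card_fiber_le_card_fiber_zero (AddMonoidHom.mulLeft t) r
    _ = #{x | t * x = 0} * ∑ r, F r := (mul_sum _ _ _).symm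

theorem sum_norm_sum_sq_eq_card_mul_card (hψ : ψ.IsPrimitive) (A : Finset R) :
    ∑ t, ‖∑ a ∈ A, ψ (t * a)‖ ^ 2 = Fintype.card R * #A := by
  classical
  have hmul_conj (t a b : R) : ψ (t * a) * starRingEnd ℂ (ψ (t * b)) = ψ (t * (a - b)) := by
    rw [← AddChar.map_neg_eq_conj, ← AddChar.map_add_eq_mul, mul_sub, sub_eq_add_neg]
  have hcomplex : ∑ t, (∑ a ∈ A, ψ (t * a)) * starRingEnd ℂ (∑ a ∈ A, ψ (t * a)) =
      Fintype.card R * #A := by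
    simp_rw [map_sum, sum_mul_sum, hmul_conj]
    rw [sum_comm]
    simp_rw [sum_comm (s := univ), AddChar.sum_mulShift _ hψ, sub_eq_zero]
    simp [mul_comm]
  simp_rw [Complex.mul_conj'] at hcomplex
  exact_mod_cast hcomplex

theorem card_mul_norm_sum_sq_le_of_stable [DecidableEq R] (hψ : ψ.IsPrimitive) {A : Finset R}
    {H : Finset Rˣ} (hA : ∀ h ∈ H, ∀ a ∈ A, ↑h * a ∈ A) (t : R) :
    #H * ‖∑ a ∈ A, ψ (t * a)‖ ^ 2 ≤ #{x | t * x = 0} * (Fintype.card R * #A) := by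
  let S (t : R) : ℝ := ‖∑ a ∈ A, ψ (t * a)‖ ^ 2
  have hS (t : R) : 0 ≤ S t := sq_nonneg _
  calc #H * S t = ∑ h ∈ H, S (t * h) := by
        rw [← nsmul_eq_mul, ← sum_const]
        exact sum_congr rfl fun h hh => by
          simp only [S, mul_assoc, sum_units_mul_of_stable (hA h hh) fun a => ψ (t * a)]
    _ = ∑ x ∈ H.map ⟨_, Units.val_injective⟩, S (t * x) := by
        rw [sum_map, Function.Embedding.coeFn_mk]
    _ ≤ ∑ x, S (t * x) := sum_le_univ_sum_of_nonneg fun x => hS _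
    _ ≤ #{x | t * x = 0} * ∑ r, S r := sum_comp_mul_left_le t hS
    _ = _ := by rw [sum_norm_sum_sq_eq_card_mul_card hψ]

theorem norm_sum_fiber_le [DecidableEq R] {M : Type*} [Monoid M] [DecidableEq M]
    (hψ : ψ.IsPrimitive) (f : Rˣ →* M) (z : M) (t : R) :
    ‖∑ u with f u = z, ψ (t * u)‖ ≤ √(Fintype.card R * #{x | t * x = 0}) := by
  have hstable : ∀ h ∈ ({u | f u = 1} : Finset Rˣ),
      ∀ a ∈ ({u | f u = z} : Finset Rˣ).map ⟨_, Units.val_injective⟩,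
        ↑h * a ∈ ({u | f u = z} : Finset Rˣ).map ⟨_, Units.val_injective⟩ := by
    simp only [mem_filter_univ, Finset.mem_map, Function.Embedding.coeFn_mk]
    rintro h hh _ ⟨u, hu, rfl⟩
    exact ⟨h * u, by rw [map_mul, hh, hu, one_mul], Units.val_mul h u⟩
  have hbound := card_mul_norm_sum_sq_le_of_stable hψ hstable t
  simp only [sum_map, card_map, Function.Embedding.coeFn_mk] at hbound
  have hcard : (#{u | f u = z} : ℝ) ≤ #{u | f u = 1} :=
    mod_cast card_fiber_le_card_fiber_one f z
  have hpos : (0 : ℝ) < #{u : Rˣ | f u = 1} :=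
    mod_cast card_pos.2 ⟨1, by simp⟩
  refine Real.le_sqrt_of_sq_le (le_of_mul_le_mul_left (hbound.trans ?_) hpos)
  calc _ ≤ (#{x | t * x = 0} : ℝ) * (Fintype.card R * #{u | f u = 1}) := by gcongr
    _ = _ := by ring

end CharacterSums

section UnitWitnesses

variable {R : Type*} [CommRing R] [Fintype R] [DecidableEq R] {d s : ℕ}

/-- The Miller-Rabin witnesses among the units of a finite commutative ring `R`; for `R = ZMod n`
one takes `n - 1 = 2 ^ s * d` with `d` odd. -/
def unitWitnesses (R : Type*) [CommRing R] [Fintype R] [DecidableEq R] (d s : ℕ) : Finset Rˣ :=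
  {u | u ^ d ≠ 1 ∧ ∀ i < s, u ^ (2 ^ i * d) ≠ -1}

theorem notMem_unitWitnesses {u : Rˣ} :
    u ∉ unitWitnesses R d s ↔ u ^ d = 1 ∨ ∃ i < s, u ^ (2 ^ i * d) = -1 := by
  simp only [unitWitnesses, mem_filter_univ]
  grind

theorem pow_two_pow_mul_eq_neg_one_pow {M : Type*} [Monoid M] [HasDistribNeg M] {u : M} {i j d : ℕ}
    (hij : i ≤ j) (h : u ^ (2 ^ i * d) = -1) : u ^ (2 ^ j * d) = (-1) ^ 2 ^ (j - i) := by
  rw [← h, ← pow_mul, mul_right_comm, ← pow_add, Nat.add_sub_cancel' hij]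

theorem pow_two_pow_mul_eq_one_of_lt {M : Type*} [Monoid M] [HasDistribNeg M] {u : M} {i j d : ℕ}
    (hij : i < j) (h : u ^ (2 ^ i * d) = -1) : u ^ (2 ^ j * d) = 1 := by
  rw [pow_two_pow_mul_eq_neg_one_pow hij.le h]
  exact (even_two.pow_of_ne_zero (Nat.sub_ne_zero_of_lt hij)).neg_one_pow

theorem pow_eq_one_of_notMem_unitWitnesses {u : Rˣ} (hu : u ∉ unitWitnesses R d s) :
    u ^ (2 ^ s * d) = 1 := by
  obtain hu | ⟨i, hi, hu⟩ := notMem_unitWitnesses.1 hu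
  · rw [pow_mul', hu, one_pow]
  · exact pow_two_pow_mul_eq_one_of_lt hi hu

theorem sum_compl_unitWitnesses {M : Type*} [AddCommMonoid M] (h : (-1 : R) ≠ 1) (f : Rˣ → M) :
    ∑ u ∈ (unitWitnesses R d s)ᶜ, f u =
      ∑ u with u ^ d = 1, f u + ∑ i ∈ range s, ∑ u with u ^ (2 ^ i * d) = -1, f u := by
  have hne : (-1 : Rˣ) ≠ 1 := fun h' => h (by simpa using congrArg Units.val h')
  have hcompl : (unitWitnesses R d s)ᶜ =
      ({u | u ^ d = 1} : Finset Rˣ) ∪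
        (range s).biUnion fun i => ({u | u ^ (2 ^ i * d) = -1} : Finset Rˣ) := by
    ext u
    simp [notMem_unitWitnesses]
  have hdisj_one : Disjoint ({u | u ^ d = 1} : Finset Rˣ)
      ((range s).biUnion fun i => ({u | u ^ (2 ^ i * d) = -1} : Finset Rˣ)) := by
    simp only [disjoint_biUnion_right, disjoint_filter]
    intro i _ u _ hone hneg
    rw [pow_mul', hone, one_pow] at hneg
    exact hne hneg.symm
  have hdisj_lt {i j : ℕ} (hij : i < j) : Disjoint ({u | u ^ (2 ^ i * d) = -1} : Finset Rˣ)
      ({u | u ^ (2 ^ j * d) = -1} : Finset Rˣ) :=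
    disjoint_filter.2 fun u _ hi hj => hne (hj ▸ pow_two_pow_mul_eq_one_of_lt hij hi)
  have hdisj : Set.PairwiseDisjoint (range s : Set ℕ)
      fun i => ({u | u ^ (2 ^ i * d) = -1} : Finset Rˣ) := by
    intro i _ j _ hij
    exact hij.lt_or_gt.elim hdisj_lt fun hji => (hdisj_lt hji).symm
  rw [hcompl, sum_union hdisj_one, sum_biUnion hdisj]

theorem norm_sum_unitWitnesses_le {ψ : AddChar R ℂ} (hψ : ψ.IsPrimitive) (h : (-1 : R) ≠ 1)
    (d s : ℕ) (t : R) :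
    ‖∑ u ∈ unitWitnesses R d s, ψ (t * u)‖ ≤
      (s + 2) * √(Fintype.card R * #{x | t * x = 0}) := by
  set B := √(Fintype.card R * #{x | t * x = 0})
  have hpow (m : ℕ) (z : Rˣ) : ‖∑ u : Rˣ with u ^ m = z, ψ (t * u)‖ ≤ B :=
    norm_sum_fiber_le hψ (powMonoidHom m) z t
  have hall : ‖∑ u : Rˣ, ψ (t * u)‖ ≤ B := by simpa using hpow 0 1
  have hneg : ‖∑ i ∈ range s, ∑ u : Rˣ with u ^ (2 ^ i * d) = -1, ψ (t * u)‖ ≤ s * B := by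
    simpa using norm_sum_le_of_le (range s) fun i _ => hpow (2 ^ i * d) (-1)
  rw [eq_sub_of_add_eq (sum_add_sum_compl (unitWitnesses R d s) fun u : Rˣ => ψ (t * u)),
    sum_compl_unitWitnesses h]
  calc _ ≤ B + (B + s * B) :=
        norm_sub_le_of_le hall (norm_add_le_of_le (hpow d 1) hneg)
    _ = (s + 2) * B := by ring

theorem card_le_two_mul_card_of_compl_subset {G : Type*} [Group G] [Fintype G] {S : Finset G}
    {K : Subgroup G} {g : G} (hg : g ∉ K) (h : ∀ u ∉ S, u ∈ K) : Fintype.card G ≤ 2 * #S := by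
  classical
  have hcompl : #Sᶜ ≤ #S := by
    refine card_le_card_of_injOn (g * ·) (fun u hu => ?_) (mul_right_injective g).injOn
    by_contra hgu
    exact hg ((K.mul_mem_cancel_right (h u (mem_compl.1 hu))).1 (h _ hgu))
  rw [← card_add_card_compl S]
  omega

theorem card_units_le_of_pow_ne_one {u : Rˣ} (hu : u ^ (2 ^ s * d) ≠ 1) :
    Fintype.card Rˣ ≤ 2 * #(unitWitnesses R d s) :=
  card_le_two_mul_card_of_compl_subset (K := (powMonoidHom (2 ^ s * d)).ker)
    (fun hker => hu (MonoidHom.mem_ker.1 hker))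
    fun _ hv => MonoidHom.mem_ker.2 (pow_eq_one_of_notMem_unitWitnesses hv)

theorem exists_pow_notMem_zpowers_neg_one {R A B : Type*} [CommRing R] [CommRing A] [CommRing B]
    (e : R ≃+* A × B) (hA : (-1 : A) ≠ 1) (hB : (-1 : B) ≠ 1) {m : ℕ} {w : Rˣ}
    (hw : w ^ m = -1) : ∃ u : Rˣ, u ^ m ∉ Subgroup.zpowers (-1) := by
  let E : Rˣ ≃* Aˣ × Bˣ := (Units.mapEquiv e.toMulEquiv).trans MulEquiv.prodUnits
  have hE : E (-1) = (-1, -1) := by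
    refine Prod.ext (Units.ext ?_) (Units.ext ?_)
    · change (e (-1)).1 = -1
      simp
    · change (e (-1)).2 = -1
      simp
  have hwm : (E w).1 ^ m = -1 := by
    rw [← Prod.pow_fst, ← map_pow, hw, hE]
  refine ⟨E.symm ((E w).1, 1), fun hmem => ?_⟩
  have hEu : E (E.symm ((E w).1, 1) ^ m) = (-1, 1) := by
    rw [map_pow, E.apply_symm_apply, Prod.pow_mk, hwm, one_pow]
  obtain ⟨k, hk⟩ := Subgroup.mem_zpowers_iff.1 hmem
  rw [← hk] at hEu
  obtain hk | hk := k.even_or_odd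
  · rw [hk.neg_one_zpow, map_one] at hEu
    exact hA (by simpa using congrArg Units.val (congrArg Prod.fst hEu).symm)
  · rw [hk.neg_one_zpow, hE] at hEu
    exact hB (by simpa using congrArg Units.val (congrArg Prod.snd hEu))

theorem card_units_le_of_ringEquiv_prod {A B : Type*} [CommRing A] [CommRing B] (e : R ≃+* A × B)
    (hA : (-1 : A) ≠ 1) (hB : (-1 : B) ≠ 1) (hd : Odd d) (hs : 0 < s) :
    Fintype.card Rˣ ≤ 2 * #(unitWitnesses R d s) := by
  let J : Finset ℕ := {j ∈ range s | ∃ w : Rˣ, w ^ (2 ^ j * d) = -1}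
  have hJ : J.Nonempty :=
    ⟨0, mem_filter.2 ⟨Finset.mem_range.2 hs, -1, by simp [hd.neg_one_pow]⟩⟩
  obtain ⟨-, w, hw⟩ := mem_filter.1 (J.max'_mem hJ)
  obtain ⟨u, hu⟩ := exists_pow_notMem_zpowers_neg_one e hA hB hw
  refine card_le_two_mul_card_of_compl_subset
    (K := (Subgroup.zpowers (-1)).comap (powMonoidHom (2 ^ J.max' hJ * d))) hu fun v hv => ?_
  rw [Subgroup.mem_comap, powMonoidHom_apply]
  obtain hv | ⟨i, hi, hv⟩ := notMem_unitWitnesses.1 hv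
  · rw [pow_mul', hv, one_pow]
    exact one_mem _
  · have hle : i ≤ J.max' hJ := J.le_max' i (mem_filter.2 ⟨Finset.mem_range.2 hi, v, hv⟩)
    rw [pow_two_pow_mul_eq_neg_one_pow hle hv]
    exact Subgroup.npow_mem_zpowers _ _

end UnitWitnesses

section WitnessCount

theorem two_pow_s2_mul_oddPart (n : ℕ) : 2 ^ s2 n * oddPart n = n - 1 :=
  Nat.ordProj_mul_ordCompl_eq_self (n - 1) 2

theorem s2_pos {n : ℕ} (h1 : 1 < n) (hodd : Odd n) : 0 < s2 n :=
  Nat.prime_two.factorization_pos_of_dvd (by omega) (hodd.tsub_odd odd_one).two_dvd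

theorem odd_oddPart {n : ℕ} (h1 : 1 < n) : Odd (oddPart n) := by
  rw [← Nat.not_even_iff_odd, even_iff_two_dvd]
  exact Nat.not_dvd_ordCompl Nat.prime_two (by omega)

theorem witnessSet_eq_map {n : ℕ} [NeZero n] (h1 : 1 < n) :
    witnessSet n = (unitWitnesses (ZMod n) (oddPart n) (s2 n)).map
      ⟨fun u : (ZMod n)ˣ => (u : ZMod n).val, (ZMod.val_injective n).comp Units.val_injective⟩ := by
  have : Fact (1 < n) := ⟨h1⟩
  ext w
  simp only [witnessSet, unitWitnesses, mem_filter, mem_univ, true_and, Finset.mem_range,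
    Finset.mem_map, Function.Embedding.coeFn_mk]
  constructor
  · rintro ⟨hwn, -, hgcd, hone, hneg⟩
    refine ⟨ZMod.unitOfCoprime w hgcd, ⟨?_, fun i hi => ?_⟩, ZMod.val_cast_of_lt hwn⟩
    · simpa [Units.ext_iff] using hone
    · simpa [Units.ext_iff] using hneg i hi
  · rintro ⟨u, ⟨hone, hneg⟩, rfl⟩
    have hne_zero : (u : ZMod n).val ≠ 0 := by simp
    have hne_one : (u : ZMod n).val ≠ 1 := fun h => by
      obtain rfl : u = 1 := Units.ext ((ZMod.val_eq_one h1 _).1 h)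
      exact hone (one_pow _)
    refine ⟨ZMod.val_lt _, by omega, ZMod.val_coe_unit_coprime u, ?_, fun i hi => ?_⟩
    · simpa [Units.ext_iff] using hone
    · simpa [Units.ext_iff] using hneg i hi

theorem exists_pow_sub_one_ne_one {n : ℕ} [NeZero n] (h : ¬ n.Coprime n.totient) :
    ∃ u : (ZMod n)ˣ, u ^ (n - 1) ≠ 1 := by
  obtain ⟨p, hp, hpn, hptot⟩ := Nat.Prime.not_coprime_iff_dvd.1 h
  have : Fact p.Prime := ⟨hp⟩
  obtain ⟨u, hu⟩ := exists_prime_orderOf_dvd_card p ((ZMod.card_units_eq_totient n).symm ▸ hptot)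
  refine ⟨u, fun hpow => hp.one_lt.not_ge ?_⟩
  have hdvd : p ∣ n - 1 := hu ▸ orderOf_dvd_of_pow_eq_one hpow
  exact Nat.le_of_dvd one_pos ((Nat.dvd_sub_iff_right NeZero.one_le hpn).1 hdvd)

theorem exists_coprime_mul_eq_of_coprime_totient {n : ℕ} (h2 : 2 < n) (hn : ¬ n.Prime)
    (h : n.Coprime n.totient) : ∃ a b, 2 < a ∧ 2 < b ∧ a.Coprime b ∧ a * b = n := by
  have hnot_dvd {p : ℕ} (hp : p.Prime) (hpn : p ∣ n) : ¬ p ∣ n.totient :=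
    fun hpt => Nat.Prime.not_coprime_iff_dvd.2 ⟨p, hp, hpn, hpt⟩ h
  have htwo : ¬ 2 ∣ n := fun h' =>
    hnot_dvd Nat.prime_two h' (Nat.totient_even h2).two_dvd
  obtain ⟨p, hp, m, rfl⟩ := Nat.exists_prime_and_dvd (by omega : n ≠ 1)
  have hpm : ¬ p ∣ m := fun h' => by
    apply hnot_dvd hp (dvd_mul_right p m)
    rw [Nat.totient_mul_of_prime_of_dvd hp h']
    exact dvd_mul_right _ _
  have hp2 : p ≠ 2 := by rintro rfl; exact htwo (dvd_mul_right _ _)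
  have hm0 : m ≠ 0 := by rintro rfl; simp at h2
  have hm1 : m ≠ 1 := by rintro rfl; exact hn (by rwa [mul_one])
  have hm2 : m ≠ 2 := by rintro rfl; exact htwo (dvd_mul_left _ _)
  exact ⟨p, m, by have := hp.two_le; omega, by omega, hp.coprime_iff_not_dvd.2 hpm, rfl⟩

theorem totient_le_two_mul_card_witnessSet {n : ℕ} (h2 : 2 < n) (hn : ¬ n.Prime) :
    n.totient ≤ 2 * #(witnessSet n) := by
  have : NeZero n := ⟨by omega⟩
  have h1 : 1 < n := by omega
  rw [witnessSet_eq_map h1, card_map, ← ZMod.card_units_eq_totient]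
  by_cases hcop : n.Coprime n.totient
  · obtain ⟨a, b, ha, hb, hab, hmul⟩ := exists_coprime_mul_eq_of_coprime_totient h2 hn hcop
    have : Fact (2 < a) := ⟨ha⟩
    have : Fact (2 < b) := ⟨hb⟩
    have hodd : Odd n := Nat.coprime_two_right.1
      (hcop.coprime_dvd_right (Nat.totient_even h2).two_dvd)
    exact card_units_le_of_ringEquiv_prod
      ((ZMod.ringEquivCongr hmul.symm).trans (ZMod.chineseRemainder hab))
      ZMod.neg_one_ne_one ZMod.neg_one_ne_one (odd_oddPart h1) (s2_pos h1 hodd)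
  · obtain ⟨u, hu⟩ := exists_pow_sub_one_ne_one hcop
    exact card_units_le_of_pow_ne_one (by rwa [two_pow_s2_mul_oddPart])

theorem inv_card_add_one_le_prod_one_sub_inv (S : Finset ℕ) (hS : ∀ p ∈ S, 2 ≤ p) :
    ((#S : ℚ) + 1)⁻¹ ≤ ∏ p ∈ S, (1 - (p : ℚ)⁻¹) := by
  induction S using Finset.induction_on_max with
  | empty => simp
  | insert m S hmax ih =>
    have hm : m ∉ S := fun h => (hmax m h).false
    have hcard : #S + 2 ≤ m := by
      have hsub : S ⊆ Finset.Ico 2 m := fun p hp =>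
        Finset.mem_Ico.2 ⟨hS p (mem_insert_of_mem hp), hmax p hp⟩
      have hle := card_le_card hsub
      have := hS m (mem_insert_self m S)
      rw [Nat.card_Ico] at hle
      omega
    have hfactor : 1 - ((#S : ℚ) + 2)⁻¹ ≤ 1 - (m : ℚ)⁻¹ := by
      gcongr
      exact_mod_cast hcard
    rw [prod_insert hm, card_insert_of_notMem hm]
    calc (((#S + 1 : ℕ) : ℚ) + 1)⁻¹ = (1 - ((#S : ℚ) + 2)⁻¹) * ((#S : ℚ) + 1)⁻¹ := by
          push_cast
          field_simp
          ring
      _ ≤ (1 - (m : ℚ)⁻¹) * ∏ p ∈ S, (1 - (p : ℚ)⁻¹) := by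
          have hpos : 0 ≤ 1 - ((#S : ℚ) + 2)⁻¹ := sub_nonneg.2 (inv_le_one_of_one_le₀ (by linarith))
          gcongr
          · exact hpos.trans hfactor
          · exact ih fun p hp => hS p (mem_insert_of_mem hp)

theorem le_card_primeFactors_add_one_mul_totient (n : ℕ) :
    n ≤ (#n.primeFactors + 1) * n.totient := by
  have hprod := inv_card_add_one_le_prod_one_sub_inv n.primeFactors
    fun p hp => (Nat.prime_of_mem_primeFactors hp).two_le
  have hq : (n : ℚ) ≤ (#n.primeFactors + 1) * n.totient := by
    rw [Nat.totient_eq_mul_prod_factors]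
    calc (n : ℚ) = (#n.primeFactors + 1) * (n * ((#n.primeFactors : ℚ) + 1)⁻¹) := by
          field_simp
      _ ≤ _ := by gcongr
  exact_mod_cast hq

theorem card_primeFactors_le_log {n : ℕ} (hn : n ≠ 0) : #n.primeFactors ≤ Nat.log 2 n := by
  refine Nat.le_log_of_pow_le one_lt_two ?_
  calc 2 ^ #n.primeFactors ≤ ∏ p ∈ n.primeFactors, p :=
        pow_card_le_prod _ _ _ fun p hp => (Nat.prime_of_mem_primeFactors hp).two_le
    _ ≤ n := Nat.le_of_dvd (Nat.pos_of_ne_zero hn) (Nat.prod_primeFactors_dvd n)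

theorem s2_le_log (n : ℕ) : s2 n ≤ Nat.log 2 n := by
  rw [s2, Nat.factorization_def _ Nat.prime_two]
  exact (padicValNat_le_nat_log _).trans (Nat.log_mono_right (Nat.sub_le n 1))

theorem le_log_add_one_mul_card_witnessSet {n : ℕ} (h2 : 2 < n) (hn : ¬ n.Prime) :
    n ≤ 2 * (Nat.log 2 n + 1) * #(witnessSet n) :=
  calc n ≤ (#n.primeFactors + 1) * n.totient := le_card_primeFactors_add_one_mul_totient n
    _ ≤ (Nat.log 2 n + 1) * (2 * #(witnessSet n)) := by
        gcongr
        · exact card_primeFactors_le_log (by omega)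
        · exact totient_le_two_mul_card_witnessSet h2 hn
    _ = 2 * (Nat.log 2 n + 1) * #(witnessSet n) := by ring

end WitnessCount

section WitnessSums

open Topology

theorem fourier_toAddCircle {n : ℕ} [NeZero n] (k : ℤ) (x : ZMod n) :
    fourier k (ZMod.toAddCircle x) = ZMod.stdAddChar ((k : ZMod n) * x) := by
  rw [fourier_apply, ← map_zsmul, zsmul_eq_mul]
  rfl

theorem card_intCast_mul_eq_zero_le {n : ℕ} [NeZero n] {k : ℤ} (hk : k ≠ 0) :
    #{x : ZMod n | (k : ZMod n) * x = 0} ≤ k.natAbs := by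
  simpa only [← zsmul_eq_mul, ← natAbs_nsmul_eq_zero] using
    IsAddCyclic.card_nsmul_eq_zero_le (α := ZMod n) (Int.natAbs_pos.2 hk)

theorem norm_sum_fourier_witnessSet_le {n : ℕ} (h2 : 2 < n) {k : ℤ} (hk : k ≠ 0) :
    ‖∑ w ∈ witnessSet n, fourier k ((w / n : ℝ) : UnitAddCircle)‖ ≤
      (Nat.log 2 n + 2) * √(n * k.natAbs) := by
  have : NeZero n := ⟨by omega⟩
  have : Fact (2 < n) := ⟨h2⟩
  simp only [witnessSet_eq_map (by omega : 1 < n), sum_map, Function.Embedding.coeFn_mk,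
    ← ZMod.toAddCircle_apply, fourier_toAddCircle]
  refine (norm_sum_unitWitnesses_le (ZMod.isPrimitive_stdAddChar n) ZMod.neg_one_ne_one
    _ _ _).trans ?_
  rw [ZMod.card]
  gcongr
  · exact s2_le_log n
  · exact card_intCast_mul_eq_zero_le hk

theorem norm_sum_fourier_witnessSet_div_card_le {n : ℕ} (h2 : 2 < n) (hn : ¬ n.Prime) {k : ℤ}
    (hk : k ≠ 0) :
    ‖(∑ w ∈ witnessSet n, fourier k ((w / n : ℝ) : UnitAddCircle)) / #(witnessSet n)‖ ≤
      2 * √k.natAbs * ((Nat.log 2 n + 2) ^ 2 / √n) := by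
  have hcard : (n : ℝ) ≤ 2 * (Nat.log 2 n + 1) * #(witnessSet n) := by
    exact_mod_cast le_log_add_one_mul_card_witnessSet h2 hn
  have hpos : (0 : ℝ) < n := by positivity
  have hW : (0 : ℝ) < #(witnessSet n) := pos_of_mul_pos_right (hpos.trans_le hcard) (by positivity)
  rw [norm_div, Complex.norm_natCast, div_le_iff₀ hW]
  calc _ ≤ (Nat.log 2 n + 2) * √(n * k.natAbs) := norm_sum_fourier_witnessSet_le h2 hk
    _ = (Nat.log 2 n + 2) * √k.natAbs / √n * n := by
        rw [Real.sqrt_mul hpos.le, div_mul_eq_mul_div, mul_div_assoc, Real.div_sqrt]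
        ring
    _ ≤ (Nat.log 2 n + 2) * √k.natAbs / √n * (2 * (Nat.log 2 n + 2) * #(witnessSet n)) := by
        gcongr
        refine hcard.trans ?_
        gcongr
        norm_num
    _ = _ := by ring

theorem tendsto_log_add_two_sq_div_sqrt :
    Tendsto (fun n : ℕ => ((Nat.log 2 n : ℝ) + 2) ^ 2 / √n) atTop (𝓝 0) := by
  have hquarter : (0 : ℝ) < 1 / 4 := by norm_num
  have hlog : Tendsto (fun x : ℝ => (Real.logb 2 x + 2) / x ^ (1 / 4 : ℝ)) atTop (𝓝 0) := by
    simpa [Real.logb, add_div, div_right_comm] using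
      ((isLittleO_log_rpow_atTop hquarter).tendsto_div_nhds_zero.div_const (Real.log 2)).add
        ((tendsto_rpow_atTop hquarter).const_div_atTop 2)
  have hsq := (hlog.pow 2).comp tendsto_natCast_atTop_atTop
  rw [zero_pow two_ne_zero] at hsq
  refine squeeze_zero (fun n => by positivity) (fun n => ?_) hsq
  have hroot : ((n : ℝ) ^ (1 / 4 : ℝ)) ^ 2 = √n := by
    rw [Real.sqrt_eq_rpow, ← Real.rpow_mul_natCast n.cast_nonneg]
    norm_num
  rw [Function.comp_apply, div_pow, hroot]
  gcongr
  exact Real.natLog_le_logb n 2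

end WitnessSums

section WeylCriterion

open MeasureTheory Topology BoundedContinuousFunction

variable {T : ℝ}

theorem isClosed_coe_image_Icc (a b : ℝ) :
    IsClosed ((↑) '' Set.Icc a b : Set (AddCircle T)) :=
  (isCompact_Icc.image (AddCircle.continuous_mk' T)).isClosed

theorem frontier_coe_image_Icc_subset (a b : ℝ) :
    frontier ((↑) '' Set.Icc a b : Set (AddCircle T)) ⊆ {↑a, ↑b} := by
  have hopen : IsOpen ((↑) '' Set.Ioo a b : Set (AddCircle T)) :=
    QuotientAddGroup.isOpenMap_coe _ isOpen_Ioo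
  rw [(isClosed_coe_image_Icc a b).frontier_eq]
  rintro _ ⟨⟨x, hx, rfl⟩, hnot⟩
  obtain rfl | rfl | hx := Set.eq_endpoints_or_mem_Ioo_of_mem_Icc hx
  · exact .inl rfl
  · exact .inr rfl
  · exact (hnot <| interior_maximal (Set.image_mono Set.Ioo_subset_Icc_self) hopen
      ⟨x, hx, rfl⟩).elim

variable [Fact (0 < T)]

theorem tendsto_integral_of_mem_span_fourier {ι : Type*} {l : Filter ι}
    {μ : ι → ProbabilityMeasure (AddCircle T)} {μ₀ : ProbabilityMeasure (AddCircle T)}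
    (h : ∀ k : ℤ, Tendsto (fun i => ∫ x, fourier k x ∂(μ i : Measure (AddCircle T))) l
      (𝓝 (∫ x, fourier k x ∂(μ₀ : Measure (AddCircle T)))))
    {f : C(AddCircle T, ℂ)} (hf : f ∈ Submodule.span ℂ (Set.range (fourier (T := T)))) :
    Tendsto (fun i => ∫ x, f x ∂(μ i : Measure (AddCircle T))) l
      (𝓝 (∫ x, f x ∂(μ₀ : Measure (AddCircle T)))) := by
  have hint (g : C(AddCircle T, ℂ)) (ν : ProbabilityMeasure (AddCircle T)) :
      Integrable g (ν : Measure (AddCircle T)) := (mkOfCompact g).integrable _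
  induction hf using Submodule.span_induction with
  | mem f hf => obtain ⟨k, rfl⟩ := hf; exact h k
  | zero => simpa using tendsto_const_nhds
  | add f g _ _ hf hg => simpa [integral_add (hint f _) (hint g _)] using hf.add hg
  | smul c f _ hf => simpa [integral_const_mul] using hf.const_mul c

theorem tendsto_probabilityMeasure_of_fourier {ι : Type*} {l : Filter ι}
    {μ : ι → ProbabilityMeasure (AddCircle T)} {μ₀ : ProbabilityMeasure (AddCircle T)}
    (h : ∀ k : ℤ, Tendsto (fun i => ∫ x, fourier k x ∂(μ i : Measure (AddCircle T))) l
      (𝓝 (∫ x, fourier k x ∂(μ₀ : Measure (AddCircle T))))) :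
    Tendsto μ l (𝓝 μ₀) := by
  refine ProbabilityMeasure.tendsto_of_tight_of_separatesPoints ℂ IsTightMeasureSet.of_compactSpace
    (A := (fourierSubalgebra (T := T)).comap (toContinuousMapStarₐ ℂ)) ?_ fun g hg => ?_
  · intro x y hxy
    obtain ⟨f, ⟨g, hg, rfl⟩, hf⟩ := fourierSubalgebra_separatesPoints hxy
    exact ⟨g, ⟨g, ⟨mkOfCompact g, hg, rfl⟩, rfl⟩, hf⟩
  · refine tendsto_integral_of_mem_span_fourier h (f := g.toContinuousMap) ?_
    rw [← fourierSubalgebra_coe]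
    exact hg

theorem integral_fourier_volume {k : ℤ} (hk : k ≠ 0) : ∫ x : AddCircle T, fourier k x = 0 :=
  integral_eq_zero_of_add_right_eq_neg (fourier_add_half_inv_index hk Fact.out)

/-- The uniform probability measure on the finite family of points `x w`, `w ∈ s`, counted with
multiplicity; it is the zero measure if `s` is empty. -/
noncomputable def empiricalMeasure {α Ω : Type*} [MeasurableSpace Ω] (s : Finset α) (x : α → Ω) :
    Measure Ω :=
  (#s : ENNReal)⁻¹ • ∑ w ∈ s, Measure.dirac (x w)

theorem empiricalMeasure_apply {α Ω : Type*} [MeasurableSpace Ω] (s : Finset α) (x : α → Ω)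
    {E : Set Ω} (hE : MeasurableSet E) [DecidablePred fun w => x w ∈ E] :
    empiricalMeasure s x E = (#s : ENNReal)⁻¹ * #{w ∈ s | x w ∈ E} := by
  simp [empiricalMeasure, Measure.dirac_apply' _ hE, Set.indicator_apply, Finset.sum_boole]

theorem isProbabilityMeasure_empiricalMeasure {α Ω : Type*} [MeasurableSpace Ω] {s : Finset α}
    (hs : s.Nonempty) (x : α → Ω) : IsProbabilityMeasure (empiricalMeasure s x) := by
  classical
  refine ⟨?_⟩
  rw [empiricalMeasure_apply s x .univ, filter_true_of_mem fun _ _ => Set.mem_univ _]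
  exact ENNReal.inv_mul_cancel (mod_cast hs.card_ne_zero) (ENNReal.natCast_ne_top _)

theorem integral_empiricalMeasure {α Ω : Type*} [MeasurableSpace Ω] [MeasurableSingletonClass Ω]
    (s : Finset α) (x : α → Ω) (f : Ω → ℂ) :
    ∫ y, f y ∂(empiricalMeasure s x) = (∑ w ∈ s, f (x w)) / #s := by
  rw [empiricalMeasure, integral_smul_measure, integral_finsetSum_measure]
  · simp [div_eq_inv_mul]
  · exact fun _ _ => integrable_dirac (by simp)

theorem volume_frontier_coe_image_Icc (a b : ℝ) :
    volume (frontier ((↑) '' Set.Icc a b : Set (AddCircle T))) = 0 := by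
  refine measure_mono_null (frontier_coe_image_Icc_subset a b) ?_
  have hsingleton (y : AddCircle T) : volume ({y} : Set (AddCircle T)) = 0 := by
    rw [← Metric.closedBall_zero, AddCircle.volume_closedBall]
    simp [Fact.out (p := 0 < T).le]
  exact measure_union_null (hsingleton a) (hsingleton b)

theorem coe_mem_image_Icc_iff {a b y : ℝ} (ha : 0 ≤ a) (hb : b ≤ T) (hy : y ∈ Set.Ioo 0 T) :
    (y : AddCircle T) ∈ ((↑) '' Set.Icc a b : Set (AddCircle T)) ↔ y ∈ Set.Icc a b := by
  refine ⟨?_, fun h => ⟨y, h, rfl⟩⟩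
  rintro ⟨x, hx, hxy⟩
  have hxy : x = y := by
    rw [← zero_add T] at hy
    obtain hx0 | hx0 := (ha.trans hx.1).eq_or_lt
    · exact (AddCircle.coe_eq_coe_iff_of_mem_Ico
        ⟨hx0.le, hx0 ▸ hy.1.trans hy.2⟩ (Set.Ioo_subset_Ico_self hy)).1 hxy
    · exact (AddCircle.coe_eq_coe_iff_of_mem_Ioc
        ⟨hx0, by linarith [hx.2]⟩ (Set.Ioo_subset_Ioc_self hy)).1 hxy
  exact hxy ▸ hx

theorem volume_coe_image_Icc {a b : ℝ} (ha : 0 ≤ a) (hb : b ≤ T) :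
    volume ((↑) '' Set.Icc a b : Set (AddCircle T)) = ENNReal.ofReal (b - a) := by
  have hpreimage : QuotientAddGroup.mk ⁻¹' ((↑) '' Set.Icc a b : Set (AddCircle T)) ∩ Set.Ioo 0 T =
      Set.Icc a b ∩ Set.Ioo 0 T := by
    ext y
    exact and_congr_left fun hy => coe_mem_image_Icc_iff ha hb hy
  rw [AddCircle.add_projection_respects_measure T 0 (isClosed_coe_image_Icc a b).measurableSet,
    zero_add, measure_congr ((ae_eq_refl _).inter Ioo_ae_eq_Ioc.symm), hpreimage,
    measure_congr ((ae_eq_refl _).inter Ioo_ae_eq_Icc),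
    Set.inter_eq_left.2 (Set.Icc_subset_Icc ha hb), Real.volume_Icc]

theorem tendsto_measureReal_coe_image_Icc_of_fourier {ι : Type*} {l : Filter ι}
    {μ : ι → Measure UnitAddCircle} (hμ : ∀ᶠ i in l, IsProbabilityMeasure (μ i))
    (h : ∀ k : ℤ, k ≠ 0 → Tendsto (fun i => ∫ x, fourier k x ∂(μ i)) l (𝓝 0))
    {a b : ℝ} (ha : 0 ≤ a) (hab : a ≤ b) (hb : b ≤ 1) :
    Tendsto (fun i => (μ i).real ((↑) '' Set.Icc a b)) l (𝓝 (b - a)) := by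
  classical
  let μ₀ : ProbabilityMeasure UnitAddCircle := ⟨volume, ⟨UnitAddCircle.measure_univ⟩⟩
  let ν (i : ι) : ProbabilityMeasure UnitAddCircle :=
    if hi : IsProbabilityMeasure (μ i) then ⟨μ i, hi⟩ else μ₀
  have hν : ∀ᶠ i in l, (ν i : Measure UnitAddCircle) = μ i := by
    filter_upwards [hμ] with i hi
    simp [ν, hi]
  have hlim : Tendsto ν l (𝓝 μ₀) := by
    refine tendsto_probabilityMeasure_of_fourier fun k => ?_
    obtain rfl | hk := eq_or_ne k 0
    · simpa using tendsto_const_nhds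
    · rw [ProbabilityMeasure.coe_mk, integral_fourier_volume hk]
      refine (h k hk).congr' ?_
      filter_upwards [hν] with i hi
      rw [hi]
  have hmeasure := (ENNReal.tendsto_toReal (measure_ne_top _ _)).comp <|
    ProbabilityMeasure.tendsto_measure_of_null_frontier_of_tendsto' hlim
      (volume_frontier_coe_image_Icc a b)
  have hvol : ((μ₀ : Measure UnitAddCircle) ((↑) '' Set.Icc a b)).toReal = b - a := by
    rw [ProbabilityMeasure.coe_mk, volume_coe_image_Icc ha hb,
      ENNReal.toReal_ofReal (sub_nonneg.2 hab)]
  rw [hvol] at hmeasure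
  refine hmeasure.congr' ?_
  filter_upwards [hν] with i hi
  rw [Function.comp_apply, hi, measureReal_def]

theorem tendsto_card_filter_div_card_of_fourier {ι α : Type*} {l : Filter ι} {s : ι → Finset α}
    {x : ι → α → ℝ} (hs : ∀ᶠ i in l, (s i).Nonempty)
    (hx : ∀ᶠ i in l, ∀ w ∈ s i, x i w ∈ Set.Ioo 0 1)
    (h : ∀ k : ℤ, k ≠ 0 → Tendsto
      (fun i => (∑ w ∈ s i, fourier k (x i w : UnitAddCircle)) / #(s i)) l (𝓝 0))
    {a b : ℝ} (ha : 0 ≤ a) (hab : a ≤ b) (hb : b ≤ 1) :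
    Tendsto (fun i => (#{w ∈ s i | a ≤ x i w ∧ x i w ≤ b} : ℝ) / #(s i)) l (𝓝 (b - a)) := by
  classical
  have hlim := tendsto_measureReal_coe_image_Icc_of_fourier
    (μ := fun i => empiricalMeasure (s i) fun w => (x i w : UnitAddCircle))
    (hs.mono fun i hi => isProbabilityMeasure_empiricalMeasure hi _)
    (by simpa only [integral_empiricalMeasure] using h) ha hab hb
  refine hlim.congr' ?_
  filter_upwards [hx] with i hi
  rw [measureReal_def, empiricalMeasure_apply _ _ (isClosed_coe_image_Icc a b).measurableSet,
    filter_congr fun w hw => coe_mem_image_Icc_iff ha hb (hi w hw)]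
  simp [div_eq_inv_mul]

end WeylCriterion

theorem witnessSet_nonempty {n : ℕ} (h2 : 2 < n) (hn : ¬ n.Prime) : (witnessSet n).Nonempty := by
  refine card_pos.1 (Nat.pos_of_ne_zero fun hcard => ?_)
  have hle := le_log_add_one_mul_card_witnessSet h2 hn
  rw [hcard] at hle
  omega

theorem div_mem_Ioo_of_mem_witnessSet {n w : ℕ} (hw : w ∈ witnessSet n) :
    (w : ℝ) / n ∈ Set.Ioo 0 1 := by
  obtain ⟨hwn, h1, -⟩ := mem_filter.1 hw
  have hwn : (w : ℝ) < n := mod_cast Finset.mem_range.1 hwn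
  have hw0 : (0 : ℝ) < w := mod_cast zero_lt_one.trans h1
  exact ⟨div_pos hw0 (hw0.trans hwn), (div_lt_one (hw0.trans hwn)).2 hwn⟩

theorem witness_equidistribution_general (a b : ℝ) (ha : 0 ≤ a) (hab : a ≤ b) (hb : b ≤ 1) :
    Tendsto (fun n : ℕ =>
        (((witnessSet n).filter (fun w : ℕ => a ≤ (w : ℝ) / n ∧ (w : ℝ) / n ≤ b)).card : ℝ) /
          ((witnessSet n).card : ℝ))
      (atTop ⊓ Filter.principal {n : ℕ | ¬ n.Prime}) (nhds (b - a)) := by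
  have hn : ∀ᶠ n : ℕ in atTop ⊓ Filter.principal {n : ℕ | ¬ n.Prime}, 2 < n ∧ ¬ n.Prime :=
    ((eventually_gt_atTop 2).filter_mono inf_le_left).and (mem_inf_of_right (mem_principal_self _))
  refine tendsto_card_filter_div_card_of_fourier (s := witnessSet) (x := fun n w => (w : ℝ) / n)
    (hn.mono fun n ⟨h2, hn⟩ => witnessSet_nonempty h2 hn)
    (.of_forall fun n w hw => div_mem_Ioo_of_mem_witnessSet hw) (fun k hk => ?_) ha hab hb
  refine squeeze_zero_norm' (hn.mono fun n ⟨h2, hn⟩ =>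
    norm_sum_fourier_witnessSet_div_card_le h2 hn hk) ?_
  simpa using (tendsto_log_add_two_sq_div_sqrt.mono_left inf_le_left).const_mul (2 * √k.natAbs)

/-- Main Theorem: the normalized Miller-Rabin witness sets become
equidistributed in [0,1] as n → ∞ through odd composite integers. -/
theorem witness_equidistribution (a b : ℝ) (ha : 0 ≤ a) (hab : a ≤ b) (hb : b ≤ 1) :
    Tendsto (fun n : ℕ =>
        (((witnessSet n).filter (fun w : ℕ => a ≤ (w : ℝ) / n ∧ (w : ℝ) / n ≤ b)).card : ℝ) /
          ((witnessSet n).card : ℝ))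
      (atTop ⊓ Filter.principal {n : ℕ | Odd n ∧ ¬ n.Prime ∧ 1 < n}) (nhds (b - a)) :=
  (witness_equidistribution_general a b ha hab hb).mono_left <|
    inf_le_inf_left _ (principal_mono.2 fun _ hn => hn.2.1)
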